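/- Let L ≥ 6 and N = ⌈L(L+1)/4⌉. Fix i with 2 ≤ i ≤ L − 2, and let {H_n} be the PLRS generated by the L coefficients [1, c_2, ..., c_{L−2}, 0, N] where c_i = 1 and c_j = 0 for all other j with 2 ≤ j ≤ L − 2. Then {H_n} is complete. -/

import Mathlib

/-- `H` (indexed from 1) is the Positive Linear Recurrence Sequence generated by the
coefficients `c 1, …, c L` (nonnegative integers with `L`, `c 1`, `c L` positive):
`H 1 = 1`, `H (n+1) = c 1 * H n + ⋯ + c n * H 1 + 1` for `1 ≤ n < L`, and
`H (n+1) = c 1 * H n + ⋯ + c L * H (n+1-L)` for `n ≥ L`. -/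
def IsPLRS (L : ℕ) (c : ℕ → ℕ) (H : ℕ → ℕ) : Prop :=
  0 < L ∧ 0 < c 1 ∧ 0 < c L ∧ H 1 = 1 ∧
  (∀ n, 1 ≤ n → n < L →
    H (n + 1) = (∑ j ∈ Finset.Icc 1 n, c j * H (n + 1 - j)) + 1) ∧
  (∀ n, L ≤ n →
    H (n + 1) = ∑ j ∈ Finset.Icc 1 L, c j * H (n + 1 - j))

/-- A sequence (indexed from 1) is complete if every positive integer is a sum of
terms of the sequence over a finite set of distinct indices (each ≥ 1). -/
def SeqComplete (H : ℕ → ℕ) : Prop :=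
  ∀ m : ℕ, 0 < m → ∃ S : Finset ℕ, (∀ i ∈ S, 1 ≤ i) ∧ m = ∑ i ∈ S, H i

/-- The `n`th Brown's gap of a sequence: `B_{H,n} = 1 + ∑_{i=1}^{n-1} H i − H n`. -/
def BrownGap (H : ℕ → ℕ) (n : ℕ) : ℤ :=
  1 + (∑ i ∈ Finset.Icc 1 (n - 1), (H i : ℤ)) - (H n : ℤ)

/-- Brown's criterion. -/
lemma brown_aux (H : ℕ → ℕ) (hB : ∀ n, 1 ≤ n → 0 ≤ BrownGap H n) (n : ℕ) :
    ∀ m : ℕ, m ≤ ∑ k ∈ Finset.Icc 1 n, H k →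
      ∃ S ⊆ Finset.Icc 1 n, m = ∑ k ∈ S, H k := by
  induction n with
  | zero =>
    intro m hm
    exact ⟨∅, by simp, by simpa using hm⟩
  | succ n ih =>
    intro m hm
    by_cases h : m ≤ ∑ k ∈ Finset.Icc 1 n, H k
    · obtain ⟨S, hS, e⟩ := ih m h
      exact ⟨S, hS.trans (Finset.Icc_subset_Icc_right (by omega)), e⟩
    · have hb := hB (n + 1) (by omega)
      unfold BrownGap at hb
      rw [Nat.add_sub_cancel, ← Nat.cast_sum] at hb
      rw [Finset.sum_Icc_succ_top (by omega)] at hm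
      obtain ⟨S, hS, e⟩ := ih (m - H (n + 1)) (by omega)
      have hn : n + 1 ∉ S := fun hh => by
        have := Finset.mem_Icc.1 (hS hh)
        omega
      refine ⟨insert (n + 1) S, ?_, ?_⟩
      · intro x hx
        rcases Finset.mem_insert.1 hx with rfl | hx
        · simp
        · have := Finset.mem_Icc.1 (hS hx)
          exact Finset.mem_Icc.2 (by omega)
      · rw [Finset.sum_insert hn]
        omega

lemma brown (H : ℕ → ℕ) (hpos : ∀ n, 1 ≤ n → 1 ≤ H n)
    (hB : ∀ n, 1 ≤ n → 0 ≤ BrownGap H n) : SeqComplete H := by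
  intro m _
  have : m ≤ ∑ k ∈ Finset.Icc 1 m, H k := by
    calc m = ∑ k ∈ Finset.Icc 1 m, 1 := by simp
      _ ≤ _ := Finset.sum_le_sum fun k hk => hpos k (Finset.mem_Icc.1 hk).1
  obtain ⟨S, hS, e⟩ := brown_aux H hB m m this
  exact ⟨S, fun i hi => (Finset.mem_Icc.1 (hS hi)).1, e⟩

/-- The arithmetic core: nonnegativity of the gaps from their recurrences. -/
lemma gap_core (L i : ℕ) (N : ℤ) (hL : 6 ≤ L) (hN0 : 0 ≤ N)
    (hN : 4 * N ≤ (L : ℤ) ^ 2 + L + 2) (hi : 2 ≤ i) (hi' : i + 2 ≤ L) (B : ℕ → ℤ)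
    (r0 : B 1 = 0)
    (r1 : ∀ n, 1 ≤ n → n < i → B (n + 1) = B n + n - 1)
    (r2 : ∀ n, i ≤ n → n < L → B (n + 1) = B n + B (n + 1 - i) + n - 2)
    (r3 : ∀ n, L ≤ n → B (n + 1) = B n + B (n + 1 - i) + N * B (n + 1 - L) + L - 1 - N) :
    ∀ n, 1 ≤ n → 0 ≤ B n := by
  have b2 : B 2 = 0 := by
    have := r1 1 le_rfl (by omega)
    norm_num at this
    omega
  -- crude bounds up to L
  have low : ∀ n, 1 ≤ n → n ≤ L → 0 ≤ B n ∧ (n : ℤ) - 3 ≤ B n := by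
    intro n
    induction n using Nat.strong_induction_on with
    | _ n ih =>
      intro h1 h2
      rcases Nat.lt_or_ge n 3 with h | h
      · interval_cases n
        · rw [r0]; norm_num
        · rw [b2]; norm_num
      · obtain ⟨k, rfl⟩ : ∃ k, n = k + 1 := ⟨n - 1, by omega⟩
        have hk := ih k (by omega) (by omega) (by omega)
        push_cast
        rcases Nat.lt_or_ge k i with hki | hki
        · have := r1 k (by omega) hki
          omega
        · have := r2 k hki (by omega)
          have := ih (k + 1 - i) (by omega) (by omega) (by omega)
          omega
  have exact' : ∀ n, 1 ≤ n → n ≤ i → 2 * B n = (n : ℤ) ^ 2 - 3 * n + 2 := by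
    intro n h1
    induction n, h1 using Nat.le_induction with
    | base => intro; rw [r0]; norm_num
    | succ k hk ih =>
      intro h
      have := r1 k hk (by omega)
      have := ih (by omega)
      push_cast
      linarith
  have b3 : 3 ≤ i → B 3 = 1 := by
    intro h
    have := exact' 3 (by omega) h
    norm_num at this
    omega
  -- quadratic bound
  have quad : ∀ n, 5 ≤ n → n ≤ L → (n : ℤ) ^ 2 - 3 * n - 4 ≤ 2 * B n := by
    intro n h1
    induction n, h1 using Nat.le_induction with
    | base =>
      intro h
      rcases Nat.lt_or_ge i 5 with h5 | h5
      · have a2 := r1 2 (by omega)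
        have a3 := r1 3 (by omega)
        have a4 := r1 4 (by omega)
        have c2 := r2 2
        have c3 := r2 3
        have c4 := r2 4
        interval_cases i <;> norm_num at * <;> grind
      · have := exact' 5 (by omega) h5
        rw [this]; norm_num
    | succ k hk ih =>
      intro h
      have ihk := ih (by omega)
      rcases Nat.lt_or_ge (k + 1) (i + 1) with h5 | h5
      · have := exact' (k + 1) (by omega) (by omega)
        rw [this]; linarith
      · have e := r2 k (by omega) (by omega)
        rcases Nat.lt_or_ge k (i + 2) with h6 | h6
        · have ei := exact' i (by omega) le_rfl
          have e0 := r2 i le_rfl (by omega)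
          rw [show i + 1 - i = 1 by omega, r0] at e0
          obtain rfl | rfl : k = i ∨ k = i + 1 := by omega
          · push_cast; linarith
          · rw [show i + 1 + 1 - i = 2 by omega, b2] at e
            push_cast at *; linarith
        · have h7 : 1 ≤ B (k + 1 - i) := by
            rcases Nat.lt_or_ge 3 (k + 1 - i) with h8 | h8
            · have := (low (k + 1 - i) (by omega) (by omega)).2
              omega
            · have : 3 ≤ i := by omega
              rw [show k + 1 - i = 3 by omega, b3 this]
          push_cast; linarith
  -- combined bound
  have comb : ∀ n, 6 ≤ n → i + 2 ≤ n → n ≤ L →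
      (n : ℤ) ^ 2 - 3 * n + 6 ≤ 2 * (B n + B (n + 1 - i) + B (n + 2 - i)) := by
    have step : ∀ k, i + 2 ≤ k → k < L →
        (k : ℤ) ^ 2 - 3 * k + 6 ≤ 2 * (B k + B (k + 1 - i) + B (k + 2 - i)) →
        ((k + 1 : ℕ) : ℤ) ^ 2 - 3 * ((k + 1 : ℕ) : ℤ) + 6 ≤
          2 * (B (k + 1) + B (k + 1 + 1 - i) + B (k + 1 + 2 - i)) := by
      intro k h1 h2 h
      have e := r2 k (by omega) h2
      have := (low (k + 1 + 2 - i) (by omega) (by omega)).2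
      have h9 : 1 ≤ B (k + 1 + 2 - i) := by omega
      rw [show k + 1 + 1 - i = k + 2 - i by omega]
      push_cast
      linarith
    rcases Nat.lt_or_ge i 4 with h4 | h4
    · intro n hn
      induction n, hn using Nat.le_induction with
      | base =>
        intro _ _
        have a2 := r1 2 (by omega)
        have c2 := r2 2
        have c3 := r2 3
        have c4 := r2 4
        have c5 := r2 5
        interval_cases i <;> norm_num at * <;> grind
      | succ k hk ih =>
        intro h h'
        exact step k (by omega) (by omega) (ih (by omega) (by omega))
    · intro n _ hn
      induction n, hn using Nat.le_induction with
      | base =>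
        intro _
        have ei := exact' i (by omega) le_rfl
        have e0 := r2 i le_rfl (by omega)
        have e1 := r2 (i + 1) (by omega) (by omega)
        rw [show i + 1 - i = 1 by omega, r0] at e0
        rw [show i + 1 + 1 - i = 2 by omega, b2] at e1
        have e3 := b3 (by omega)
        have e4 := exact' 4 (by omega) (by omega)
        rw [show i + 2 + 1 - i = 3 by omega, show i + 2 + 2 - i = 4 by omega]
        push_cast at *
        rw [show i + 1 + 1 = i + 2 by omega] at e1
        linarith
      | succ k hk ih =>
        intro h'
        exact step k (by omega) (by omega) (ih (by omega) (by omega))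
  have hLZ : (6 : ℤ) ≤ L := by exact_mod_cast hL
  have qL := quad L (by omega) le_rfl
  have bL2 : 2 ≤ B L := by nlinarith
  have s1 := r3 L le_rfl
  have s2 := r3 (L + 1) (by omega)
  rw [show L + 1 - L = 1 by omega, r0] at s1
  rw [show L + 1 + 1 - L = 2 by omega, b2] at s2
  have bL1 : 1 ≤ B (L + 1) := by
    have := (low (L + 1 - i) (by omega) (by omega)).1
    nlinarith
  have bLL : 0 ≤ B (L + 2) := by
    have cL := comb L hL hi' le_rfl
    rw [show L + 1 + 1 - i = L + 2 - i by omega] at s2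
    rw [show L + 2 = L + 1 + 1 by omega, s2]
    linarith
  have bL3 : 1 ≤ B (L + 3) := by
    have s3 := r3 (L + 2) (by omega)
    rw [show L + 2 + 1 - L = 3 by omega, show L + 2 + 1 = L + 3 by omega] at s3
    rcases Nat.lt_or_ge 2 i with h | h
    · rw [b3 h] at s3
      have : 0 ≤ B (L + 3 - i) := by
        rcases Nat.lt_or_ge L (L + 3 - i) with h8 | h8
        · omega
        · exact (low _ (by omega) h8).1
      linarith
    · obtain rfl : i = 2 := by omega
      have c2 := r2 2 le_rfl (by omega)
      norm_num at c2
      rw [r0, b2] at c2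
      have b3' : B 3 = 0 := by omega
      rw [b3', show L + 3 - 2 = L + 1 by omega] at s3
      rw [show L + 1 + 1 - 2 = L by omega, show L + 1 + 1 = L + 2 by omega] at s2
      rw [show L + 1 - 2 = L - 1 by omega] at s1
      have qM := quad (L - 1) (by omega) (by omega)
      rw [Nat.cast_sub (by omega)] at qM
      push_cast at qM
      nlinarith
  have main : ∀ n, 1 ≤ n → 0 ≤ B n ∧ (4 ≤ n → n ≠ L + 2 → 1 ≤ B n) := by
    intro n
    induction n using Nat.strong_induction_on with
    | _ n ih =>
      intro h1
      rcases Nat.lt_or_ge L n with h | h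
      swap
      · have := low n h1 h
        exact ⟨this.1, by omega⟩
      rcases Nat.lt_or_ge (L + 3) n with h3 | h3
      swap
      · obtain rfl | rfl | rfl : n = L + 1 ∨ n = L + 2 ∨ n = L + 3 := by omega
        · exact ⟨by omega, by omega⟩
        · exact ⟨by omega, by omega⟩
        · exact ⟨by omega, by omega⟩
      have key : 1 ≤ B n := by
        obtain ⟨k, rfl⟩ : ∃ k, n = k + 1 := ⟨n - 1, by omega⟩
        have e := r3 k (by omega)
        have p1 := (ih k (by omega) (by omega)).1
        have p2 := (ih (k + 1 - i) (by omega) (by omega)).1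
        by_cases hk : k + 1 - L = L + 2
        · obtain rfl : k = 2 * L + 1 := by omega
          have e1 := r3 (2 * L) (by omega)
          have e2 := r3 (2 * L - 1) (by omega)
          rw [show 2 * L + 1 - L = L + 1 by omega] at e1
          rw [show 2 * L - 1 + 1 - L = L by omega] at e2
          rw [hk] at e
          have q1 := (ih (2 * L + 1 - i) (by omega) (by omega)).1
          have q2 := (ih (2 * L - 1 + 1 - i) (by omega) (by omega)).1
          have q3 := (ih (2 * L - 1) (by omega) (by omega)).1
          rw [show 2 * L - 1 + 1 = 2 * L by omega] at *
          have t1 := mul_nonneg hN0 bLL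
          have t2 := mul_le_mul_of_nonneg_left bL1 hN0
          have t3 := mul_le_mul_of_nonneg_left bL2 hN0
          linarith
        · have p3 := (ih (k + 1 - L) (by omega) (by omega)).2 (by omega) hk
          have t2 := mul_le_mul_of_nonneg_left p3 hN0
          linarith
      exact ⟨by omega, fun _ _ => key⟩
  exact fun n hn => (main n hn).1

lemma gap_succ (H : ℕ → ℕ) (n : ℕ) (hn : 1 ≤ n) :
    BrownGap H (n + 1) = BrownGap H n + 2 * H n - H (n + 1) := by
  obtain ⟨k, rfl⟩ : ∃ k, n = k + 1 := ⟨n - 1, by omega⟩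
  unfold BrownGap
  simp only [Nat.add_sub_cancel]
  rw [Finset.sum_Icc_succ_top (by omega)]
  ring

/-- Evaluation of the sparse sums in the recurrence. -/
lemma sparse_sum (L N i n m : ℕ) (H : ℕ → ℕ) (hi : 2 ≤ i) (hi' : i + 2 ≤ L) (hm : 1 ≤ m) :
    ∑ j ∈ Finset.Icc 1 m, (if j = 1 ∨ j = i then 1 else if j = L then N else 0) * H (n + 1 - j)
      = H n + (if i ≤ m then H (n + 1 - i) else 0) + (if L ≤ m then N * H (n + 1 - L) else 0) := by
  have : ∀ j ∈ Finset.Icc 1 m,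
      (if j = 1 ∨ j = i then 1 else if j = L then N else 0) * H (n + 1 - j)
      = (if j = 1 then H (n + 1 - j) else 0) + (if j = i then H (n + 1 - j) else 0)
        + (if j = L then N * H (n + 1 - j) else 0) := by
    intro j _
    by_cases h1 : j = 1
    · subst h1
      simp [show 1 ≠ i by omega, show 1 ≠ L by omega]
    · by_cases h2 : j = i
      · subst h2
        simp [h1, show j ≠ L by omega]
      · by_cases h3 : j = L <;> simp [h1, h2, h3]
        subst h3
        simp [h1, h2]
  rw [Finset.sum_congr rfl this, Finset.sum_add_distrib, Finset.sum_add_distrib,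
    Finset.sum_ite_eq', Finset.sum_ite_eq', Finset.sum_ite_eq']
  simp [hm, show 1 ≤ i by omega, show 1 ≤ L by omega]

theorem stmt13 (L N i : ℕ) (hL : 6 ≤ L)
    (hN : (N : ℤ) = ⌈((L : ℚ) * ((L : ℚ) + 1)) / 4⌉)
    (hi : 2 ≤ i) (hi' : i ≤ L - 2) (H : ℕ → ℕ)
    (hH : IsPLRS L (fun j => if j = 1 ∨ j = i then 1 else if j = L then N else 0) H) :
    SeqComplete H := by
  have hiL : i + 2 ≤ L := by omega
  obtain ⟨-, -, -, H1, Ha, Hb⟩ := hH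
  have h1 : ∀ n, 1 ≤ n → n < i → H (n + 1) = H n + 1 := by
    intro n hn hni
    rw [Ha n hn (by omega), sparse_sum L N i n n H hi hiL hn]
    simp [show ¬ i ≤ n by omega, show ¬ L ≤ n by omega]
  have h2 : ∀ n, i ≤ n → n < L → H (n + 1) = H n + H (n + 1 - i) + 1 := by
    intro n hn hni
    rw [Ha n (by omega) (by omega), sparse_sum L N i n n H hi hiL (by omega)]
    simp [hn, show ¬ L ≤ n by omega]
  have h3 : ∀ n, L ≤ n → H (n + 1) = H n + H (n + 1 - i) + N * H (n + 1 - L) := by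
    intro n hn
    rw [Hb n hn, sparse_sum L N i n L H hi hiL (by omega)]
    simp [show i ≤ L by omega]
  have hpos : ∀ n, 1 ≤ n → 1 ≤ H n := by
    intro n hn
    induction n, hn using Nat.le_induction with
    | base => omega
    | succ k hk ih =>
      rcases Nat.lt_or_ge k i with h | h
      · rw [h1 k hk h]; omega
      · rcases Nat.lt_or_ge k L with h' | h'
        · rw [h2 k h h']; omega
        · rw [h3 k h', add_assoc]; exact le_add_right ih
  have hN4 : 4 * (N : ℤ) ≤ (L : ℤ) ^ 2 + L + 2 := by
    have hc := Int.ceil_lt_add_one (((L : ℚ) * ((L : ℚ) + 1)) / 4)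
    rw [← hN] at hc
    have hc' : 4 * (N : ℚ) < (L : ℚ) * (L + 1) + 4 := by
      push_cast at hc
      linarith
    have hc2 : 4 * N < L * (L + 1) + 4 := by exact_mod_cast hc'
    obtain ⟨t, ht⟩ := Nat.even_mul_succ_self L
    have hc3 : 4 * N ≤ L * (L + 1) + 2 := by omega
    have : 4 * (N : ℤ) ≤ L * (L + 1) + 2 := by exact_mod_cast hc3
    linarith
  -- closed forms
  have f1 : ∀ n, 1 ≤ n → n ≤ i → H n = n := by
    intro n hn
    induction n, hn using Nat.le_induction with
    | base => intro _; exact H1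
    | succ k hk ih =>
      intro h
      rw [h1 k hk (by omega), ih (by omega)]
  have f2 : ∀ n, i ≤ n → n ≤ L → H n = n + ∑ k ∈ Finset.Icc 1 (n - i), H k := by
    intro n hn
    induction n, hn using Nat.le_induction with
    | base => intro _; simp [f1 i (by omega) le_rfl]
    | succ k hk ih =>
      intro h
      have e : k + 1 - i = k - i + 1 := by omega
      rw [h2 k hk (by omega), ih (by omega), e, Finset.sum_Icc_succ_top (by omega)]
      omega
  have f3 : ∀ n, L ≤ n → H n = L + ∑ k ∈ Finset.Icc 1 (n - i), H k
      + N * ∑ k ∈ Finset.Icc 1 (n - L), H k := by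
    intro n hn
    induction n, hn using Nat.le_induction with
    | base => simpa using f2 L (by omega) le_rfl
    | succ k hk ih =>
      have e : k + 1 - i = k - i + 1 := by omega
      have e' : k + 1 - L = k - L + 1 := by omega
      rw [h3 k hk, ih, e, e', Finset.sum_Icc_succ_top (by omega),
        Finset.sum_Icc_succ_top (by omega)]
      ring
  refine brown H hpos (gap_core L i N hL (by positivity) hN4 hi hiL (BrownGap H) ?_ ?_ ?_ ?_)
  · simp [BrownGap, H1]
  · intro n hn hni
    rw [gap_succ H n hn, h1 n hn hni, f1 n hn (by omega)]
    push_cast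
    ring
  · intro n hn hnL
    rw [gap_succ H n (by omega), h2 n hn hnL]
    have e := f2 n hn (by omega)
    have e2 : BrownGap H (n + 1 - i)
        = 1 + ((∑ k ∈ Finset.Icc 1 (n - i), H k : ℕ) : ℤ) - H (n + 1 - i) := by
      unfold BrownGap
      rw [show n + 1 - i - 1 = n - i by omega]
      push_cast
      rfl
    rw [e2]
    zify at e
    push_cast
    linarith
  · intro n hnL
    rw [gap_succ H n (by omega), h3 n hnL]
    have e := f3 n hnL
    have e2 : ∀ a, a ≤ n → BrownGap H (n + 1 - a)
        = 1 + ((∑ k ∈ Finset.Icc 1 (n - a), H k : ℕ) : ℤ) - H (n + 1 - a) := by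
      intro a ha
      unfold BrownGap
      rw [show n + 1 - a - 1 = n - a by omega]
      push_cast
      rfl
    rw [e2 i (by omega), e2 L hnL]
    zify at e
    push_cast
    linarith
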